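/- The point H̃ = T_P⁻¹(H) is the midpoint of the segment joining P′ and K⁻¹(H), and H̃ is the reflection of Q through O (that is, O is the midpoint of segment QH̃). -/

import Mathlib

noncomputable section

/-- The real affine plane. -/
abbrev Pt : Type := ℝ × ℝ

/-- `u` and `v` are parallel vectors (the zero vector is parallel to everything). -/
def Par (u v : Pt) : Prop := ∃ t : ℝ, u = t • v ∨ v = t • u

/-- The centroid of the triangle `ABC`. -/
def cent (A B C : Pt) : Pt := (3⁻¹ : ℝ) • (A + B + C)

/-- The homothety with center `Z` and ratio `r`. -/
def homoth (Z : Pt) (r : ℝ) (X : Pt) : Pt := Z + r • (X - Z)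

/-- The value at `p` of the quadratic polynomial with coefficient vector `c`. -/
def qval (c : Fin 6 → ℝ) (p : Pt) : ℝ :=
  c 0 * p.1 ^ 2 + c 1 * p.1 * p.2 + c 2 * p.2 ^ 2 + c 3 * p.1 + c 4 * p.2 + c 5

/-- `S` is a conic: the zero locus of a real polynomial of total degree 2. -/
def IsConic (S : Set Pt) : Prop :=
  ∃ c : Fin 6 → ℝ, ¬(c 0 = 0 ∧ c 1 = 0 ∧ c 2 = 0) ∧ S = {p | qval c p = 0}

/-- `Z` is a center of symmetry of `S`. -/
def IsCenterOf (Z : Pt) (S : Set Pt) : Prop :=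
  ∀ p ∈ S, (2 : ℝ) • Z - p ∈ S

/-- The gradient at `p` of the quadratic polynomial with coefficients `c`. -/
def qgrad (c : Fin 6 → ℝ) (p : Pt) : Pt :=
  (2 * c 0 * p.1 + c 1 * p.2 + c 3, c 1 * p.1 + 2 * c 2 * p.2 + c 4)

/-- The line through `X` and `Y`. -/
def lineThru (X Y : Pt) : Set Pt := {p | ∃ t : ℝ, p = X + t • (Y - X)}

/-- `L` is the tangent line at the nonsingular point `p` of the conic with coefficients `c`. -/
def IsTangentLineAt (c : Fin 6 → ℝ) (L : Set Pt) (p : Pt) : Prop :=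
  qval c p = 0 ∧ qgrad c p ≠ 0 ∧
  L = {q | (qgrad c p).1 * (q.1 - p.1) + (qgrad c p).2 * (q.2 - p.2) = 0}

/-- A plane vector decomposes along two vectors with nonzero determinant. -/
theorem exists_eq_smul_add_smul {u v : Pt} (h : u.1 * v.2 - u.2 * v.1 ≠ 0) (w : Pt) :
    ∃ s t : ℝ, w = s • u + t • v := by
  refine ⟨(w.1 * v.2 - w.2 * v.1) / (u.1 * v.2 - u.2 * v.1),
    (u.1 * w.2 - u.2 * w.1) / (u.1 * v.2 - u.2 * v.1), ?_⟩
  ext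
  · simp only [Prod.fst_add, Prod.smul_fst, smul_eq_mul]
    rw [div_mul_eq_mul_div, div_mul_eq_mul_div, ← add_div, eq_div_iff h]
    ring
  · simp only [Prod.snd_add, Prod.smul_snd, smul_eq_mul]
    rw [div_mul_eq_mul_div, div_mul_eq_mul_div, ← add_div, eq_div_iff h]
    ring

theorem Par.det_eq_zero {v w : Pt} (h : Par v w) : v.1 * w.2 - v.2 * w.1 = 0 := by
  obtain ⟨t, rfl | rfl⟩ := h <;> simp only [Prod.smul_fst, Prod.smul_snd, smul_eq_mul] <;> ring

theorem Par.smul_left {v w : Pt} (h : Par v w) (r : ℝ) (hr : r ≠ 0) : Par (r • v) w := by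
  obtain ⟨t, rfl | rfl⟩ := h
  · exact ⟨r * t, Or.inl (smul_smul _ _ _)⟩
  · exact ⟨t * r⁻¹, Or.inr (by rw [smul_smul, inv_mul_cancel_right₀ hr])⟩

/-- Parallel vectors have proportional coordinates in any basis of the plane. -/
theorem Par.coords {u v w w' : Pt} (h : u.1 * v.2 - u.2 * v.1 ≠ 0) {a b c d : ℝ}
    (hp : Par w w') (hw : w = a • u + b • v) (hw' : w' = c • u + d • v) : a * d = b * c := by
  have hdet := hp.det_eq_zero
  subst hw hw'
  simp only [Prod.fst_add, Prod.snd_add, Prod.smul_fst, Prod.smul_snd, smul_eq_mul] at hdet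
  have hmul : (u.1 * v.2 - u.2 * v.1) * (a * d - b * c) = 0 := by linear_combination hdet
  exact sub_eq_zero.mp ((mul_eq_zero.mp hmul).resolve_left h)

theorem Collinear.par {X Y Z : Pt} (h : Collinear ℝ {X, Y, Z}) : Par (Y - X) (Z - X) := by
  obtain ⟨v, hv⟩ := (collinear_iff_of_mem (p₀ := X) (by simp)).mp h
  obtain ⟨r, hr⟩ := hv Y (by simp)
  obtain ⟨s, hs⟩ := hv Z (by simp)
  have hY : Y - X = r • v := by rw [hr]; simp
  have hZ : Z - X = s • v := by rw [hs]; simp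
  rw [hY, hZ]
  by_cases hs0 : s = 0
  · exact ⟨0, Or.inr (by simp [hs0])⟩
  · exact ⟨r / s, Or.inl (by rw [smul_smul, div_mul_cancel₀ _ hs0])⟩

theorem AffineIndependent.det_ne_zero {A B C : Pt} (h : AffineIndependent ℝ ![A, B, C]) :
    (B - A).1 * (C - A).2 - (B - A).2 * (C - A).1 ≠ 0 := by
  intro h0
  rw [affineIndependent_iff_not_collinear_set] at h
  apply h
  rw [collinear_iff_of_mem (p₀ := A) (by simp)]
  by_cases hB : B - A = 0
  · refine ⟨C - A, ?_⟩
    rintro p (rfl | rfl | rfl)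
    · exact ⟨0, by simp⟩
    · exact ⟨0, by simpa [sub_eq_zero] using hB⟩
    · exact ⟨1, by simp⟩
  · refine ⟨B - A, ?_⟩
    rintro p (rfl | rfl | rfl)
    · exact ⟨0, by simp⟩
    · exact ⟨1, by simp⟩
    · by_cases hB1 : (B - A).1 = 0
      · have hB2 : (B - A).2 ≠ 0 := fun hB2 => hB (Prod.ext hB1 hB2)
        refine ⟨(p - A).2 / (B - A).2, ?_⟩
        rw [vadd_eq_add, ← sub_eq_iff_eq_add]
        ext
        · simp only [Prod.smul_fst, smul_eq_mul, hB1, mul_zero]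
          rw [hB1, zero_mul, zero_sub, neg_eq_zero] at h0
          exact (mul_eq_zero.mp h0).resolve_left hB2
        · simp only [Prod.smul_snd, smul_eq_mul]
          rw [div_mul_cancel₀ _ hB2]
      · refine ⟨(p - A).1 / (B - A).1, ?_⟩
        rw [vadd_eq_add, ← sub_eq_iff_eq_add]
        ext
        · simp only [Prod.smul_fst, smul_eq_mul]
          rw [div_mul_cancel₀ _ hB1]
        · simp only [Prod.smul_snd, smul_eq_mul]
          rw [div_mul_eq_mul_div, eq_div_iff hB1]
          linear_combination h0

/-- The trace on `YZ` of the cevian through `X` and `P = X + b (Y - X) + c (Z - X)`. -/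
theorem trace_eq {X Y Z P D : Pt} {b c : ℝ}
    (h : (Y - X).1 * (Z - X).2 - (Y - X).2 * (Z - X).1 ≠ 0) (hbc : b + c ≠ 0)
    (hP : P = X + b • (Y - X) + c • (Z - X))
    (hXPD : Collinear ℝ {X, P, D}) (hYZD : Collinear ℝ {Y, Z, D}) :
    D = X + (b / (b + c)) • (Y - X) + (c / (b + c)) • (Z - X) := by
  obtain ⟨s, t, hst⟩ := exists_eq_smul_add_smul h (D - X)
  have h₁ : b * t = c * s := hXPD.par.coords h (by rw [hP]; abel) hst
  have h₂ : -1 * t = 1 * (s - 1) := hYZD.par.coords h (by module)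
    (by linear_combination (norm := module) hst)
  have hs : s = b / (b + c) := by
    rw [eq_div_iff hbc]; linear_combination -h₁ - b * h₂
  have ht : t = c / (b + c) := by
    rw [eq_div_iff hbc]; linear_combination h₁ - c * h₂
  rw [← hs, ← ht, add_assoc, ← hst]
  abel

/-- In the affine frame `A, B, C`, the lines through `A` and `B` parallel to `QD` and `QE` meet in
exactly one point, with the given coordinates. -/
theorem orthocenter_coords {A B C D E Q H : Pt} {x y z T : ℝ}
    (h : (B - A).1 * (C - A).2 - (B - A).2 * (C - A).1 ≠ 0)
    (hsum : x + y + z = 1) (hx0 : x ≠ 0) (hy0 : y ≠ 0) (hz0 : z ≠ 0)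
    (hx1 : 1 - x ≠ 0) (hy1 : 1 - y ≠ 0)
    (hT : T = x * y + y * z + z * x) (hT0 : T ≠ 0)
    (hD : D = A + (y / (1 - x)) • (B - A) + (z / (1 - x)) • (C - A))
    (hE : E = A + (z / (1 - y)) • (C - A))
    (hQ : Q = A + (y * (1 - y) / (2 * T)) • (B - A) + (z * (1 - z) / (2 * T)) • (C - A))
    (hAH : Par (H - A) (D - Q)) (hBH : Par (H - B) (E - Q)) :
    H = A + ((T - x ^ 2) * (T - z ^ 2) / (4 * x * z * T)) • (B - A)
      + ((T - x ^ 2) * (T - y ^ 2) / (4 * x * y * T)) • (C - A) := by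
  obtain ⟨s, t, hst⟩ := exists_eq_smul_add_smul h (H - A)
  have hDQ : s * (z / (1 - x) - z * (1 - z) / (2 * T))
      = t * (y / (1 - x) - y * (1 - y) / (2 * T)) :=
    hAH.coords h hst (by rw [hD, hQ]; module)
  have hEQ : (s - 1) * (z / (1 - y) - z * (1 - z) / (2 * T))
      = t * (-(y * (1 - y) / (2 * T))) :=
    hBH.coords h (by linear_combination (norm := module) hst) (by rw [hE, hQ]; module)
  have hx : x = 1 - y - z := by linear_combination hsum
  have h₁ : s * z * (T - y ^ 2) = t * y * (T - z ^ 2) := by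
    field_simp at hDQ
    subst hT hx
    linear_combination hDQ
  have h₂ : (s - 1) * z * (T - x ^ 2) = -(t * y * (1 - y) ^ 2) := by
    field_simp at hEQ
    subst hT hx
    linear_combination hEQ
  have hs : s = (T - x ^ 2) * (T - z ^ 2) / (4 * x * z * T) := by
    rw [eq_div_iff (by positivity)]
    apply mul_left_cancel₀ hz0
    subst hT hx
    linear_combination (1 - y) ^ 2 * h₁ + (y * (1 - y - z) + y * z + z * (1 - y - z) - z ^ 2) * h₂
  have ht : t = (T - x ^ 2) * (T - y ^ 2) / (4 * x * y * T) := by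
    rw [eq_div_iff (by positivity)]
    apply mul_left_cancel₀ hz0
    subst hT hx
    linear_combination (y * (1 - y - z) + y * z + z * (1 - y - z) - y ^ 2) * h₂
      - (y * (1 - y - z) + y * z + z * (1 - y - z) - (1 - y - z) ^ 2) * h₁
  rw [← hs, ← ht, add_assoc, ← hst]
  abel

/-- An affine map in terms of the images of a triangle's vertices. -/
theorem AffineEquiv.apply_frame (T : Pt ≃ᵃ[ℝ] Pt) (A B C : Pt) (s t : ℝ) :
    T (A + s • (B - A) + t • (C - A)) = T A + s • (T B - T A) + t • (T C - T A) := by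
  have hB : T.linear (B - A) = T B - T A := T.toAffineMap.linearMap_vsub B A
  have hC : T.linear (C - A) = T C - T A := T.toAffineMap.linearMap_vsub C A
  have hM := T.map_vadd A (s • (B - A) + t • (C - A))
  simp only [vadd_eq_add, map_add, map_smul, hB, hC] at hM
  rw [add_assoc, add_comm A, hM]
  abel

theorem Htilde_midpoint_lemma
    (A B C P P' Q Q' D E F D₃ E₃ F₃ : Pt) (x y z : ℝ)
    (hABC : AffineIndependent ℝ ![A, B, C])
    (hsum : x + y + z = 1)
    (hPco : P = x • A + y • B + z • C)
    (hx0 : x ≠ 0) (hy0 : y ≠ 0) (hz0 : z ≠ 0)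
    (hx1 : x ≠ 1) (hy1 : y ≠ 1) (hz1 : z ≠ 1)
    (hst : x * y + y * z + z * x ≠ 0)
    (hP' : P' = (y * z / (x * y + y * z + z * x)) • A
        + (x * z / (x * y + y * z + z * x)) • B
        + (x * y / (x * y + y * z + z * x)) • C)
    (hQ : Q = homoth (cent A B C) (-(1 / 2)) P')
    (hQ' : Q' = homoth (cent A B C) (-(1 / 2)) P)
    (hD : Collinear ℝ {A, P, D} ∧ Collinear ℝ {B, C, D})
    (hE : Collinear ℝ {B, P, E} ∧ Collinear ℝ {A, C, E})
    (hF : Collinear ℝ {C, P, F} ∧ Collinear ℝ {A, B, F})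
    (hD₃ : Collinear ℝ {A, P', D₃} ∧ Collinear ℝ {B, C, D₃})
    (hE₃ : Collinear ℝ {B, P', E₃} ∧ Collinear ℝ {A, C, E₃})
    (hF₃ : Collinear ℝ {C, P', F₃} ∧ Collinear ℝ {A, B, F₃})
    (TP : Pt ≃ᵃ[ℝ] Pt) (hTP : TP A = D ∧ TP B = E ∧ TP C = F)
    (O H : Pt)
    (hO : Par (midpoint ℝ B C - O) (D - Q) ∧ Par (midpoint ℝ C A - O) (E - Q) ∧
          Par (midpoint ℝ A B - O) (F - Q))
    (hH : Par (H - A) (D - Q) ∧ Par (H - B) (E - Q) ∧ Par (H - C) (F - Q)) :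
    TP.symm H = midpoint ℝ P' (homoth (cent A B C) (-2) H) ∧
    O = midpoint ℝ Q (TP.symm H) := by
  have h := hABC.det_ne_zero
  have hx1' : 1 - x ≠ 0 := sub_ne_zero.mpr hx1.symm
  have hy1' : 1 - y ≠ 0 := sub_ne_zero.mpr hy1.symm
  have hz1' : 1 - z ≠ 0 := sub_ne_zero.mpr hz1.symm
  have hx : x = 1 - y - z := by linear_combination hsum
  have hDc : D = A + (y / (1 - x)) • (B - A) + (z / (1 - x)) • (C - A) := by
    have hyz : y + z = 1 - x := by linear_combination hsum
    have := trace_eq (b := y) (c := z) h (by rwa [hyz]) (by rw [hPco, hx]; module) hD.1 hD.2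
    rwa [hyz] at this
  have hEc : E = A + (z / (1 - y)) • (C - A) := by
    have hxz : x + z = 1 - y := by linear_combination hsum
    have := trace_eq (X := B) (Y := A) (Z := C) (b := x) (c := z)
      (fun h0 => h (by simp only [Prod.fst_sub, Prod.snd_sub] at h0 ⊢; linear_combination -h0))
      (by rwa [hxz]) (by rw [hPco, hx]; module) hE.1 hE.2
    rw [hxz] at this
    have hxy : x / (1 - y) = 1 - z / (1 - y) := by
      rw [eq_sub_iff_add_eq, ← add_div, hxz, div_self hy1']
    rw [this, hxy]
    module
  have hFc : F = A + (y / (1 - z)) • (B - A) := by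
    have hxy : x + y = 1 - z := by linear_combination hsum
    have := trace_eq (X := C) (Y := A) (Z := B) (b := x) (c := y)
      (fun h0 => h (by simp only [Prod.fst_sub, Prod.snd_sub] at h0 ⊢; linear_combination h0))
      (by rwa [hxy]) (by rw [hPco, hx]; module) hF.1 hF.2
    rw [hxy] at this
    have hxz : x / (1 - z) = 1 - y / (1 - z) := by
      rw [eq_sub_iff_add_eq, ← add_div, hxy, div_self hz1']
    rw [this, hxz]
    module
  obtain ⟨T, hT⟩ : ∃ T, T = x * y + y * z + z * x := ⟨_, rfl⟩
  rw [← hT] at hst hP'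
  have hP'c : P' = A + (x * z / T) • (B - A) + (x * y / T) • (C - A) := by
    have hyz : y * z / T = 1 - x * z / T - x * y / T := by
      field_simp
      linear_combination -hT
    rw [hP', hyz]
    module
  have hQc : Q = A + (y * (1 - y) / (2 * T)) • (B - A) + (z * (1 - z) / (2 * T)) • (C - A) := by
    have hy : y * (1 - y) / (2 * T) = (1 - x * z / T) / 2 := by
      field_simp
      subst hT hx
      ring
    have hz : z * (1 - z) / (2 * T) = (1 - x * y / T) / 2 := by
      field_simp
      subst hT hx
      ring
    rw [hQ, hP'c, hy, hz, homoth, cent]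
    module
  have hHc := orthocenter_coords h hsum hx0 hy0 hz0 hx1' hy1' hT hst hDc hEc hQc hH.1 hH.2.1
  have hOH : (3 : ℝ) • cent A B C - (2 : ℝ) • O = H := by
    rw [hHc]
    refine orthocenter_coords h hsum hx0 hy0 hz0 hx1' hy1' hT hst hDc hEc hQc ?_ ?_
    · convert hO.1.smul_left 2 two_ne_zero using 1
      rw [cent, midpoint_eq_smul_add, invOf_eq_inv]
      module
    · convert hO.2.1.smul_left 2 two_ne_zero using 1
      rw [cent, midpoint_eq_smul_add, invOf_eq_inv]
      module
  have hsymm : TP.symm H = midpoint ℝ P' (homoth (cent A B C) (-2) H) := by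
    apply TP.injective
    set s := (T - x ^ 2) * (T - z ^ 2) / (4 * x * z * T) with hs
    set t := (T - x ^ 2) * (T - y ^ 2) / (4 * x * y * T) with ht
    have hM : midpoint ℝ P' (homoth (cent A B C) (-2) H) = A
        + ((x * z / T + 1 - 2 * s) / 2) • (B - A) + ((x * y / T + 1 - 2 * t) / 2) • (C - A) := by
      rw [hP'c, hHc, homoth, cent, midpoint_eq_smul_add, invOf_eq_inv]
      module
    rw [TP.apply_symm_apply, hM, TP.apply_frame, hTP.1, hTP.2.1, hTP.2.2, hDc, hEc, hFc, hHc]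
    match_scalars
    all_goals
      rw [hs, ht]
      field_simp
      subst hT hx
      ring
  refine ⟨hsymm, ?_⟩
  rw [hsymm, ← hOH, hQ, homoth, homoth, midpoint_eq_smul_add, midpoint_eq_smul_add, invOf_eq_inv]
  module
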